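/- Let A be a weighted permutation matrix that is permutationally similar to the block-diagonal matrix (A₁ ⊕ ⋯ ⊕ A_{p+q}) ⊕ (B₁ ⊕ ⋯ ⊕ B_r), where p, q, r ≥ 0; for 1 ≤ j ≤ p+q, A_j is of size n_j ≥ 2 with entries A_j(s, s+1) = a_s^{(j)} for 1 ≤ s ≤ n_j−1 and A_j(n_j, 1) = a_{n_j}^{(j)}, all other entries 0; for 1 ≤ k ≤ r, B_k is of size m_k ≥ 1 with entries B_k(t, t+1) = b_t^{(k)} for 1 ≤ t ≤ m_k−1, all other entries 0. If all the weights a_s^{(j)} and b_t^{(k)} are strictly positive real numbers, then d(A) = Σ_{j=1}^{p+q} ⌊n_j/2⌋ + Σ_{k=1}^{r} ⌈m_k/2⌉. -/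

import Mathlib

open Matrix Polynomial

noncomputable def zdi {m : Type*} [Fintype m] (A : Matrix m m ℂ) : ℕ :=
  sSup {k : ℕ | ∃ V : Matrix m (Fin k) ℂ, Vᴴ * V = 1 ∧ Vᴴ * A * V = 0}

noncomputable def matRe {m : Type*} (A : Matrix m m ℂ) : Matrix m m ℂ :=
  (2⁻¹ : ℂ) • (A + Aᴴ)

noncomputable def iNonneg {m : Type*} [Fintype m] [DecidableEq m] (M : Matrix m m ℂ) : ℕ :=
  if hM : M.IsHermitian then (Finset.univ.filter fun i => 0 ≤ hM.eigenvalues i).card else 0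

def numRange {m : Type*} [Fintype m] (A : Matrix m m ℂ) : Set ℂ :=
  {z | ∃ x : m → ℂ, star x ⬝ᵥ x = 1 ∧ star x ⬝ᵥ A.mulVec x = z}

noncomputable def arg2pi (z : ℂ) : ℝ :=
  if 0 ≤ Complex.arg z then Complex.arg z else Complex.arg z + 2 * Real.pi

def UnitSim {m : Type*} [Fintype m] [DecidableEq m] (A B : Matrix m m ℂ) : Prop :=
  ∃ U ∈ Matrix.unitaryGroup m ℂ, Uᴴ * A * U = B

def UnitSimG {m l : Type*} [Fintype m] [DecidableEq m] [Fintype l] [DecidableEq l]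
    (A : Matrix m m ℂ) (B : Matrix l l ℂ) : Prop :=
  ∃ e : m ≃ l, UnitSim (Matrix.reindex e e A) B

def superMat (n : ℕ) (w : ℕ → ℂ) : Matrix (Fin n) (Fin n) ℂ :=
  Matrix.of fun i j => if (j : ℕ) = (i : ℕ) + 1 then w (i : ℕ) else 0

def cycMat (n : ℕ) (w : ℕ → ℂ) : Matrix (Fin n) (Fin n) ℂ :=
  Matrix.of fun i j => if (j : ℕ) = ((i : ℕ) + 1) % n then w (i : ℕ) else 0

def IsWeightedPerm {m : Type*} (A : Matrix m m ℂ) : Prop :=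
  (∀ i j j', A i j ≠ 0 → A i j' ≠ 0 → j = j') ∧
  (∀ i i' j, A i j ≠ 0 → A i' j ≠ 0 → i = i')

/-- The block-diagonal matrix `(A₁ ⊕ ⋯ ⊕ A_J) ⊕ (B₁ ⊕ ⋯ ⊕ B_r)`, where `A_j` is the cyclic
weighted-shift matrix of size `nsz j` with weights `a j` and `B_k` is the (noncyclic) weighted
shift of size `msz k` with weights `b k`. -/
noncomputable def bigBlock (J r : ℕ) (nsz : Fin J → ℕ) (msz : Fin r → ℕ)
    (a : Fin J → ℕ → ℂ) (b : Fin r → ℕ → ℂ) :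
    Matrix (Σ i : Fin J ⊕ Fin r, Sum.elim (fun j => Fin (nsz j)) (fun k => Fin (msz k)) i)
      (Σ i : Fin J ⊕ Fin r, Sum.elim (fun j => Fin (nsz j)) (fun k => Fin (msz k)) i) ℂ :=
  Matrix.blockDiagonal' fun i => match i with
    | Sum.inl j => cycMat (nsz j) (a j)
    | Sum.inr k => superMat (msz k) (b k)

/-! A subspace isotropic for `M` meets trivially every subspace on which `x* M x`, `x ≠ 0`, stays in
a set omitting `0`, which bounds `zdi M` from above. Using one convex cone for all diagonal blocks,
the half-plane `Im z < 0` together with the positive real ray, such subspaces of the blocks add up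
to one for the block-diagonal matrix.

For a real matrix `M`, conjugation of vectors shows that `(x* M x).im` is negative on a subspace of
dimension at least half the rank of `ℑ M`. The equation `ℑ M x = 0` is a two-step recurrence, so the
kernel has dimension at most `1` for a path and at most `2` for a cycle. When a cycle has a nonzero
kernel vector, positivity of the weights provides a real one at which the form is positive; the ray
in the cone makes room for this additional dimension. A path is treated as a cycle whose last weight
is zero.

The matching lower bounds come from the indices of even distance to the first one, no two of which
are joined by a weight; in a cycle of odd length the last of them is left out. -/

open scoped ComplexStarModule

lemma card_le_of_mulVec_eq_zero {K m n : Type*} [Field K] [Fintype m] [Fintype n]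
    {M : Matrix m n K} (h : ∀ x, M *ᵥ x = 0 → x = 0) : Fintype.card n ≤ Fintype.card m :=
  card_le_of_injective K M.mulVecLin <| (injective_iff_map_eq_zero _).2 h

lemma eq_zero_of_mulVec_eq_zero_of_conjTranspose_mul_self {R m n : Type*} [Semiring R] [StarRing R]
    [Fintype m] [Fintype n] [DecidableEq n] {V : Matrix m n R} (hV : Vᴴ * V = 1) {x : n → R}
    (hx : V *ᵥ x = 0) : x = 0 := by
  rw [← Matrix.one_mulVec x, ← hV, ← Matrix.mulVec_mulVec, hx, Matrix.mulVec_zero]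

lemma conjTranspose_submatrix_mul_mul {R m n κ : Type*} [NonUnitalNonAssocSemiring R] [StarRing R]
    [Fintype m] (U : Matrix m n R) (A : Matrix m m R) (f : κ → n) :
    (U.submatrix id f)ᴴ * A * U.submatrix id f = (Uᴴ * A * U).submatrix f f :=
  rfl

lemma blockDiagonal'_mulVec {R I : Type*} [NonUnitalNonAssocSemiring R] [Fintype I] [DecidableEq I]
    {m n : I → Type*} [∀ i, Fintype (n i)] (M : ∀ i, Matrix (m i) (n i) R) (x : (Σ i, n i) → R)
    (i : I) (s : m i) :
    (blockDiagonal' M *ᵥ x) ⟨i, s⟩ = (M i *ᵥ fun t => x ⟨i, t⟩) s := by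
  rw [mulVec, dotProduct, Fintype.sum_sigma, Finset.sum_eq_single i]
  · simp [mulVec, dotProduct]
  · exact fun j _ hj => Finset.sum_eq_zero fun t _ => by
      rw [blockDiagonal'_apply_ne _ _ _ hj.symm, zero_mul]
  · simp

lemma star_mulVec_star {R m : Type*} [CommSemiring R] [StarRing R] [Fintype m] {M : Matrix m m R}
    (hM : M.map star = M) (x : m → R) : M *ᵥ star x = star (M *ᵥ x) := by
  nth_rw 1 [← hM]
  rw [star_mulVec, ← vecMul_transpose]
  rfl

lemma card_le_rank_add_card {K m n : Type*} [Field K] [Fintype n] {H : Matrix m n K}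
    (s : Finset n) (h : ∀ x, H *ᵥ x = 0 → (∀ i ∈ s, x i = 0) → x = 0) :
    Fintype.card n ≤ H.rank + s.card := by
  let restr : LinearMap.ker H.mulVecLin →ₗ[K] (s → K) :=
    LinearMap.funLeft K K Subtype.val ∘ₗ (LinearMap.ker H.mulVecLin).subtype
  have hrestr : Function.Injective restr := (injective_iff_map_eq_zero _).2 fun x hx =>
    Subtype.ext <| h x x.2 fun i hi => congrFun hx ⟨i, hi⟩
  have hker := LinearMap.finrank_le_finrank_of_injective hrestr
  have hrn := LinearMap.finrank_range_add_finrank_ker H.mulVecLin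
  rw [Module.finrank_fintype_fun_eq_card] at hker hrn
  rw [Fintype.card_coe] at hker
  rw [Matrix.rank]
  omega

section ZeroDilation

variable {m n ι : Type*} [Fintype m] [Fintype n] [Fintype ι]

lemma mem_upperBounds_zdi (A : Matrix m m ℂ) : Fintype.card m ∈
    upperBounds {k : ℕ | ∃ V : Matrix m (Fin k) ℂ, Vᴴ * V = 1 ∧ Vᴴ * A * V = 0} := by
  rintro k ⟨V, hV, -⟩
  simpa using card_le_of_mulVec_eq_zero fun x hx =>
    eq_zero_of_mulVec_eq_zero_of_conjTranspose_mul_self hV hx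

lemma exists_isometry_zdi (A : Matrix m m ℂ) :
    ∃ V : Matrix m (Fin (zdi A)) ℂ, Vᴴ * V = 1 ∧ Vᴴ * A * V = 0 :=
  Nat.sSup_mem (s := {k : ℕ | ∃ V : Matrix m (Fin k) ℂ, Vᴴ * V = 1 ∧ Vᴴ * A * V = 0})
    ⟨0, 0, Subsingleton.elim _ _, Subsingleton.elim _ _⟩ ⟨_, mem_upperBounds_zdi A⟩

lemma card_le_zdi [DecidableEq ι] {A : Matrix m m ℂ} {V : Matrix m ι ℂ} (hV : Vᴴ * V = 1)
    (hAV : Vᴴ * A * V = 0) : Fintype.card ι ≤ zdi A := by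
  let e := (Fintype.equivFin ι).symm
  refine le_csSup ⟨_, mem_upperBounds_zdi A⟩ ⟨V.submatrix id e, ?_, ?_⟩
  · rw [← Matrix.submatrix_one_equiv e, ← hV]
    rfl
  · rw [conjTranspose_submatrix_mul_mul, hAV, Matrix.submatrix_zero]
    rfl

lemma card_le_zdi_of_submatrix_eq_zero {A : Matrix m m ℂ} {f : ι → m} (hf : f.Injective)
    (hA : A.submatrix f f = 0) : Fintype.card ι ≤ zdi A := by
  classical
  refine card_le_zdi (V := (1 : Matrix m m ℂ).submatrix id f) ?_ ?_
  · rw [← Matrix.submatrix_one f hf]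
    simpa using conjTranspose_submatrix_mul_mul (1 : Matrix m m ℂ) 1 f
  · rw [conjTranspose_submatrix_mul_mul, conjTranspose_one, Matrix.one_mul, Matrix.mul_one, hA]

lemma zdi_le_zdi_reindex (e : m ≃ n) (A : Matrix m m ℂ) : zdi A ≤ zdi (reindex e e A) := by
  obtain ⟨V, hV, hAV⟩ := exists_isometry_zdi A
  rw [← Fintype.card_fin (zdi A)]
  refine card_le_zdi (V := V.submatrix e.symm id) ?_ ?_
  · rw [← hV, Matrix.conjTranspose_submatrix, Matrix.submatrix_mul_equiv, Matrix.submatrix_id_id]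
  · rw [← hAV, Matrix.conjTranspose_submatrix, Matrix.reindex_apply, Matrix.submatrix_mul_equiv,
      Matrix.submatrix_mul_equiv, Matrix.submatrix_id_id]

lemma zdi_reindex (e : m ≃ n) (A : Matrix m m ℂ) : zdi (reindex e e A) = zdi A :=
  le_antisymm (by simpa using zdi_le_zdi_reindex e.symm (reindex e e A)) (zdi_le_zdi_reindex e A)

lemma sum_zdi_le_zdi_blockDiagonal' {I : Type*} [Fintype I] [DecidableEq I] {m : I → Type*}
    [∀ i, Fintype (m i)] (M : ∀ i, Matrix (m i) (m i) ℂ) :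
    ∑ i, zdi (M i) ≤ zdi (blockDiagonal' M) := by
  choose V hV hMV using fun i => exists_isometry_zdi (M i)
  calc ∑ i, zdi (M i) = Fintype.card (Σ i, Fin (zdi (M i))) := by simp
    _ ≤ zdi (blockDiagonal' M) := card_le_zdi (V := blockDiagonal' V) ?_ ?_
  · simp only [blockDiagonal'_conjTranspose, ← blockDiagonal'_mul, hV]
    exact blockDiagonal'_one
  · simp only [blockDiagonal'_conjTranspose, ← blockDiagonal'_mul, hMV]
    exact blockDiagonal'_zero

end ZeroDilation

section QuadForm

variable {m ι : Type*} [Fintype m] [Fintype ι]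

/-- The quadratic form `x ↦ x* M x` attached to a square complex matrix. -/
def quadForm (M : Matrix m m ℂ) (x : m → ℂ) : ℂ :=
  star x ⬝ᵥ M *ᵥ x

lemma quadForm_apply_zero (M : Matrix m m ℂ) : quadForm M 0 = 0 := by
  simp [quadForm]

lemma quadForm_mulVec (M : Matrix m m ℂ) (W : Matrix m ι ℂ) (c : ι → ℂ) :
    quadForm M (W *ᵥ c) = quadForm (Wᴴ * M * W) c := by
  simp only [quadForm, star_mulVec, ← dotProduct_mulVec, mulVec_mulVec, Matrix.mul_assoc]

lemma quadForm_smul_apply (M : Matrix m m ℂ) (t : ℂ) (x : m → ℂ) :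
    quadForm M (t • x) = Complex.normSq t * quadForm M x := by
  simp only [quadForm, mulVec_smul, star_smul, smul_dotProduct, dotProduct_smul, smul_eq_mul,
    Complex.normSq_eq_conj_mul_self, Complex.star_def]
  ring

lemma quadForm_conjTranspose (M : Matrix m m ℂ) (x : m → ℂ) :
    quadForm Mᴴ x = star (quadForm M x) := by
  rw [quadForm, quadForm, star_dotProduct, star_mulVec, conjTranspose_conjTranspose,
    dotProduct_mulVec]

lemma quadForm_star {M : Matrix m m ℂ} (hM : M.map star = M) (x : m → ℂ) :
    quadForm M (star x) = star (quadForm M x) := by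
  rw [quadForm, quadForm, star_mulVec_star hM, star_dotProduct_star, dotProduct_comm]

lemma imaginaryPart_mulVec (M : Matrix m m ℂ) (x : m → ℂ) :
    (ℑ M : Matrix m m ℂ) *ᵥ x = (-(Complex.I / 2)) • (M *ᵥ x - Mᴴ *ᵥ x) := by
  rw [imaginaryPart_apply_coe, ← sub_mulVec, ← smul_mulVec, star_eq_conjTranspose]
  congr 1
  ext
  simp only [Matrix.smul_apply, Complex.real_smul, Complex.ofReal_inv, Complex.ofReal_ofNat,
    smul_eq_mul]
  ring

lemma imaginaryPart_mulVec_eq_zero_iff {M : Matrix m m ℂ} {x : m → ℂ} :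
    (ℑ M : Matrix m m ℂ) *ᵥ x = 0 ↔ M *ᵥ x = Mᴴ *ᵥ x := by
  rw [imaginaryPart_mulVec, smul_eq_zero_iff_right (by simp), sub_eq_zero]

lemma quadForm_imaginaryPart (M : Matrix m m ℂ) (x : m → ℂ) :
    quadForm (ℑ M : Matrix m m ℂ) x = (quadForm M x).im := by
  have h : quadForm (ℑ M : Matrix m m ℂ) x =
      -(Complex.I / 2) * (quadForm M x - quadForm Mᴴ x) := by
    simp only [quadForm, imaginaryPart_mulVec, dotProduct_smul, dotProduct_sub, smul_eq_mul]
  rw [h, quadForm_conjTranspose, Complex.star_def, Complex.sub_conj]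
  push_cast
  linear_combination -((quadForm M x).im : ℂ) * Complex.I_sq

lemma quadForm_add_of_mulVec_eq_zero {H : Matrix m m ℂ} (hH : H.IsHermitian) {w : m → ℂ}
    (hw : H *ᵥ w = 0) (x : m → ℂ) : quadForm H (x + w) = quadForm H x := by
  have hw' : star w ᵥ* H = 0 := by rw [← hH.eq, ← star_mulVec, hw, star_zero]
  simp [quadForm, mulVec_add, hw, dotProduct_mulVec (star w), hw']

lemma quadForm_diagonal [DecidableEq m] (d : m → ℝ) (x : m → ℂ) :
    quadForm (diagonal (RCLike.ofReal ∘ d)) x = (∑ i, d i * Complex.normSq (x i) : ℝ) := by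
  simp only [quadForm, dotProduct, mulVec_diagonal, Complex.ofReal_sum, Complex.ofReal_mul,
    Complex.normSq_eq_conj_mul_self]
  exact Finset.sum_congr rfl fun i _ => mul_left_comm _ _ _

lemma quadForm_blockDiagonal' {I : Type*} [Fintype I] [DecidableEq I] {m : I → Type*}
    [∀ i, Fintype (m i)] (M : ∀ i, Matrix (m i) (m i) ℂ) (x : (Σ i, m i) → ℂ) :
    quadForm (blockDiagonal' M) x = ∑ i, quadForm (M i) fun s => x ⟨i, s⟩ := by
  simp only [quadForm, dotProduct, Fintype.sum_sigma, blockDiagonal'_mulVec]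
  rfl

end QuadForm

/-- Some `W* M W`, with `W` having columns indexed by `ι`, has a quadratic form whose values off the
origin lie in `S`. When `0 ∉ S`, the matrix `W` is injective and its range meets every subspace
isotropic for `M` trivially. -/
def CompressesInto {m : Type*} [Fintype m] (M : Matrix m m ℂ) (S : Set ℂ) (ι : Type*)
    [Fintype ι] : Prop :=
  ∃ W : Matrix m ι ℂ, ∀ c, c ≠ 0 → quadForm M (W *ᵥ c) ∈ S

namespace CompressesInto

variable {m ι κ : Type*} [Fintype m] [Fintype ι] [Fintype κ] {M : Matrix m m ℂ} {S T : Set ℂ}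

lemma mono (h : CompressesInto M S ι) (hST : S ⊆ T) : CompressesInto M T ι :=
  h.imp fun _ hW c hc => hST (hW c hc)

lemma of_card_le (h : CompressesInto M S ι) (hκ : Fintype.card κ ≤ Fintype.card ι) :
    CompressesInto M S κ := by
  classical
  obtain ⟨f⟩ := Function.Embedding.nonempty_of_card_le hκ
  obtain ⟨W, hW⟩ := h
  let P : Matrix ι κ ℂ := (1 : Matrix ι ι ℂ).submatrix id f
  have hP : Pᴴ * P = 1 := by
    simpa [P] using conjTranspose_submatrix_mul_mul (1 : Matrix ι ι ℂ) 1 f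
  refine ⟨W * P, fun c hc => ?_⟩
  rw [← mulVec_mulVec]
  exact hW _ fun h0 => hc (eq_zero_of_mulVec_eq_zero_of_conjTranspose_mul_self hP h0)

lemma star_preimage (h : CompressesInto M S ι) (hM : M.map star = M) :
    CompressesInto M (star ⁻¹' S) ι := by
  obtain ⟨W, hW⟩ := h
  refine ⟨W.map star, fun c hc => ?_⟩
  have hWc : W.map star *ᵥ c = star (W *ᵥ star c) := by
    rw [star_mulVec, star_star, ← vecMul_transpose]
    rfl
  rw [Set.mem_preimage, ← quadForm_star hM, hWc, star_star]
  exact hW _ (star_ne_zero.2 hc)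

lemma zdi_add_card_le (h : CompressesInto M S ι) (hS : 0 ∉ S) :
    zdi M + Fintype.card ι ≤ Fintype.card m := by
  obtain ⟨W, hW⟩ := h
  obtain ⟨V, hV, hMV⟩ := exists_isometry_zdi M
  suffices h : ∀ x, fromCols V W *ᵥ x = 0 → x = 0 by
    simpa using card_le_of_mulVec_eq_zero h
  intro x hx
  rw [fromCols_mulVec] at hx
  have hW0 : quadForm M (W *ᵥ x ∘ Sum.inr) = 0 := by
    rw [eq_neg_of_add_eq_zero_right hx, ← mulVec_neg, quadForm_mulVec, hMV]
    simp [quadForm]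
  have hinr : x ∘ Sum.inr = 0 := by
    by_contra hc
    exact hS (hW0 ▸ hW _ hc)
  have hinl : x ∘ Sum.inl = 0 := by
    rw [hinr, mulVec_zero, add_zero] at hx
    exact eq_zero_of_mulVec_eq_zero_of_conjTranspose_mul_self hV hx
  exact funext <| Sum.rec (congrFun hinl) (congrFun hinr)

lemma blockDiagonal' {I : Type*} [Fintype I] [DecidableEq I] {m ι : I → Type*}
    [∀ i, Fintype (m i)] [∀ i, Fintype (ι i)] {M : ∀ i, Matrix (m i) (m i) ℂ}
    {S : AddSubsemigroup ℂ} (h : ∀ i, CompressesInto (M i) S (ι i)) :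
    CompressesInto (Matrix.blockDiagonal' M) S (Σ i, ι i) := by
  classical
  choose W hW using h
  refine ⟨Matrix.blockDiagonal' W, fun c hc => ?_⟩
  let c' i : ι i → ℂ := fun t => c ⟨i, t⟩
  have hsum : quadForm (Matrix.blockDiagonal' M) (Matrix.blockDiagonal' W *ᵥ c) =
      ∑ i with c' i ≠ 0, quadForm (M i) (W i *ᵥ c' i) := by
    rw [quadForm_blockDiagonal', Finset.sum_filter_of_ne]
    · exact Finset.sum_congr rfl fun i _ => congrArg _ (funext (blockDiagonal'_mulVec W c i))
    · rintro i - hi h0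
      rw [h0, mulVec_zero, quadForm_apply_zero] at hi
      exact hi rfl
  rw [hsum]
  refine Finset.sum_induction_nonempty _ (· ∈ S) (fun _ _ => S.add_mem) ?_
    fun i hi => hW i _ (Finset.mem_filter.1 hi).2
  obtain ⟨⟨i, s⟩, hs⟩ := Function.ne_iff.1 hc
  exact ⟨i, by simpa using fun h0 => hs (congrFun h0 s)⟩

end CompressesInto

lemma zdi_blockDiagonal'_eq_sum {I : Type*} [Fintype I] [DecidableEq I] {m ι : I → Type*}
    [∀ i, Fintype (m i)] [∀ i, Fintype (ι i)] {M : ∀ i, Matrix (m i) (m i) ℂ} {d : I → ℕ}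
    {S : AddSubsemigroup ℂ} (hS : 0 ∉ S) (h : ∀ i, CompressesInto (M i) S (ι i))
    (hd : ∀ i, d i ≤ zdi (M i)) (hcard : ∀ i, Fintype.card (m i) ≤ d i + Fintype.card (ι i)) :
    zdi (blockDiagonal' M) = ∑ i, d i := by
  refine le_antisymm ?_ ((Finset.sum_le_sum fun i _ => hd i).trans
    (sum_zdi_le_zdi_blockDiagonal' M))
  have hle := (CompressesInto.blockDiagonal' h).zdi_add_card_le hS
  have hsum := Finset.sum_le_sum fun i (_ : i ∈ Finset.univ) => hcard i
  rw [Fintype.card_sigma, Fintype.card_sigma] at hle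
  rw [Finset.sum_add_distrib] at hsum
  omega

section RealMatrix

variable {m ι : Type*} [Fintype m] [Fintype ι]

lemma exists_quadForm_mulVec_eq_sum_eigenvalues [DecidableEq m] {H : Matrix m m ℂ}
    (hH : H.IsHermitian) (f : ι → m) (hf : f.Injective) : ∃ W : Matrix m ι ℂ, ∀ c,
      quadForm H (W *ᵥ c) = (∑ i, hH.eigenvalues (f i) * Complex.normSq (c i) : ℝ) := by
  classical
  let U : Matrix m m ℂ := hH.eigenvectorUnitary
  have hU : Uᴴ * H * U = diagonal (RCLike.ofReal ∘ hH.eigenvalues) := by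
    rw [← hH.conjStarAlgAut_star_eigenvectorUnitary, Unitary.conjStarAlgAut_star_apply]
    rfl
  refine ⟨U.submatrix id f, fun c => ?_⟩
  rw [quadForm_mulVec, conjTranspose_submatrix_mul_mul, hU, submatrix_diagonal _ _ hf]
  exact quadForm_diagonal (hH.eigenvalues ∘ f) c

lemma compressesInto_neg_eigenvalues [DecidableEq m] {H : Matrix m m ℂ} (hH : H.IsHermitian) :
    CompressesInto H {z | z.re < 0} {i // hH.eigenvalues i < 0} := by
  obtain ⟨W, hW⟩ := exists_quadForm_mulVec_eq_sum_eigenvalues hH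
    (Subtype.val : {i // hH.eigenvalues i < 0} → m) Subtype.val_injective
  refine ⟨W, fun c hc => ?_⟩
  rw [hW, Set.mem_ofPred_eq, Complex.ofReal_re]
  obtain ⟨i, hi⟩ := Function.ne_iff.1 hc
  exact Finset.sum_neg' (fun j _ => mul_nonpos_of_nonpos_of_nonneg j.2.le (Complex.normSq_nonneg _))
    ⟨i, Finset.mem_univ i, mul_neg_of_neg_of_pos i.2 (Complex.normSq_pos.2 hi)⟩

lemma compressesInto_pos_eigenvalues [DecidableEq m] {H : Matrix m m ℂ} (hH : H.IsHermitian) :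
    CompressesInto H {z | 0 < z.re} {i // 0 < hH.eigenvalues i} := by
  obtain ⟨W, hW⟩ := exists_quadForm_mulVec_eq_sum_eigenvalues hH
    (Subtype.val : {i // 0 < hH.eigenvalues i} → m) Subtype.val_injective
  refine ⟨W, fun c hc => ?_⟩
  rw [hW, Set.mem_ofPred_eq, Complex.ofReal_re]
  obtain ⟨i, hi⟩ := Function.ne_iff.1 hc
  exact Finset.sum_pos' (fun j _ => mul_nonneg j.2.le (Complex.normSq_nonneg _))
    ⟨i, Finset.mem_univ i, mul_pos i.2 (Complex.normSq_pos.2 hi)⟩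

lemma rank_eq_card_neg_add_card_pos_eigenvalues [DecidableEq m] {H : Matrix m m ℂ}
    (hH : H.IsHermitian) : H.rank = Fintype.card {i // hH.eigenvalues i < 0} +
      Fintype.card {i // 0 < hH.eigenvalues i} := by
  rw [hH.rank_eq_card_non_zero_eigs, ← Fintype.card_subtype_or_disjoint]
  · simp only [lt_or_lt_iff_ne]
  · exact Pi.disjoint_iff.2 fun i => Prop.disjoint_iff.2 <| not_and.2 lt_asymm

lemma CompressesInto.of_imaginaryPart {M : Matrix m m ℂ} {S : Set ℂ}
    (h : CompressesInto (ℑ M : Matrix m m ℂ) S ι) :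
    CompressesInto M ((fun z : ℂ => (z.im : ℂ)) ⁻¹' S) ι :=
  h.imp fun _ hW c hc => by
    rw [Set.mem_preimage, ← quadForm_imaginaryPart]
    exact hW c hc

/-- If more than half of the nonzero eigenvalues of `ℑ M` are positive, conjugate the corresponding
eigenspace: for real `M`, this flips the sign of `(x* M x).im`. -/
lemma compressesInto_im_neg {M : Matrix m m ℂ} (hM : M.map star = M) :
    CompressesInto M {z | z.im < 0} (Fin (((ℑ M : Matrix m m ℂ).rank + 1) / 2)) := by
  classical
  have hH : (ℑ M : Matrix m m ℂ).IsHermitian := (ℑ M).2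
  have hrank := rank_eq_card_neg_add_card_pos_eigenvalues hH
  rcases le_total (Fintype.card {i // hH.eigenvalues i < 0})
    (Fintype.card {i // 0 < hH.eigenvalues i}) with hle | hle
  · have hpos := (compressesInto_pos_eigenvalues hH).of_imaginaryPart.star_preimage hM
    refine (hpos.mono fun z hz => ?_).of_card_le (by rw [Fintype.card_fin]; omega)
    simpa using hz
  · have hneg := (compressesInto_neg_eigenvalues hH).of_imaginaryPart
    exact hneg.of_card_le (by rw [Fintype.card_fin]; omega)

/-- The open lower half-plane together with the open positive real ray: the numbers whose argument
lies in `(-π, 0]`. -/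
def lowerLexCone : AddSubsemigroup ℂ where
  carrier := {z | z.im < 0 ∨ z.im = 0 ∧ 0 < z.re}
  add_mem' {z w} hz hw := by
    simp only [Set.mem_ofPred_eq, Complex.add_im, Complex.add_re] at *
    grind

lemma zero_notMem_lowerLexCone : 0 ∉ lowerLexCone := by
  rintro (h | ⟨-, h⟩) <;> exact lt_irrefl _ h

lemma im_neg_subset_lowerLexCone : {z : ℂ | z.im < 0} ⊆ lowerLexCone :=
  fun _ => Or.inl

lemma CompressesInto.sum_unit_of_mem_ker {M : Matrix m m ℂ}
    (h : CompressesInto M {z | z.im < 0} ι) {w : m → ℂ}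
    (hw : (ℑ M : Matrix m m ℂ) *ᵥ w = 0) (hpos : 0 < (quadForm M w).re) :
    CompressesInto M lowerLexCone (ι ⊕ Unit) := by
  obtain ⟨W, hW⟩ := h
  refine ⟨fromCols W (replicateCol Unit w), fun c hc => ?_⟩
  set t := c (Sum.inr ())
  have hker : (ℑ M : Matrix m m ℂ) *ᵥ (t • w) = 0 := by rw [mulVec_smul, hw, smul_zero]
  have hWc : fromCols W (replicateCol Unit w) *ᵥ c = W *ᵥ (c ∘ Sum.inl) + t • w := by
    rw [fromCols_mulVec]
    congr 1
    ext
    simp [mulVec, dotProduct, mul_comm, t]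
  have him : (quadForm M (W *ᵥ (c ∘ Sum.inl) + t • w)).im =
      (quadForm M (W *ᵥ (c ∘ Sum.inl))).im := by
    rw [← Complex.ofReal_inj, ← quadForm_imaginaryPart, ← quadForm_imaginaryPart,
      quadForm_add_of_mulVec_eq_zero (ℑ M).2 hker]
  rw [hWc]
  by_cases hinl : c ∘ Sum.inl = 0
  · have ht : t ≠ 0 := fun ht => hc <| funext <| Sum.rec (congrFun hinl) fun _ => ht
    refine Or.inr ⟨by rw [him, hinl, mulVec_zero, quadForm_apply_zero, Complex.zero_im], ?_⟩
    rw [hinl, mulVec_zero, zero_add, quadForm_smul_apply, Complex.re_ofReal_mul]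
    exact mul_pos (Complex.normSq_pos.2 ht) hpos
  · exact Or.inl (him ▸ hW _ hinl)

lemma compressesInto_lowerLexCone_of_ker {M : Matrix m m ℂ} (hM : M.map star = M)
    (hrank : Fintype.card m ≤ (ℑ M : Matrix m m ℂ).rank + 2)
    (hker : ∀ x, x ≠ 0 → (ℑ M : Matrix m m ℂ) *ᵥ x = 0 →
      ∃ w, (ℑ M : Matrix m m ℂ) *ᵥ w = 0 ∧ 0 < (quadForm M w).re) :
    CompressesInto M lowerLexCone (Fin ((Fintype.card m + 1) / 2)) := by
  have hneg := compressesInto_im_neg hM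
  by_cases htriv : ∀ x, (ℑ M : Matrix m m ℂ) *ᵥ x = 0 → x = 0
  · have hfull := card_le_rank_add_card (H := (ℑ M : Matrix m m ℂ)) ∅ fun x hx _ => htriv x hx
    refine (hneg.mono im_neg_subset_lowerLexCone).of_card_le ?_
    simp only [Fintype.card_fin, Finset.card_empty] at hfull ⊢
    omega
  · push Not at htriv
    obtain ⟨x, hx, hx0⟩ := htriv
    obtain ⟨w, hw, hpos⟩ := hker x hx0 hx
    refine (hneg.sum_unit_of_mem_ker hw hpos).of_card_le ?_
    simp only [Fintype.card_sum, Fintype.card_fin, Fintype.card_unit]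
    omega

end RealMatrix

/-- `|x|` is again a solution, but may vanish at every other index of a cycle of `σ`. The solution
`i ↦ (α i * |x (σ i)|)⁻¹`, which vanishes (as `0⁻¹ = 0`) where `|x ∘ σ|` does, is therefore added to
it. -/
lemma exists_real_solution_sum_pos {m : Type*} [Fintype m] {σ : Equiv.Perm m} {α : m → ℝ}
    (hα : ∀ i, 0 < α i) {x : m → ℂ} (hx : x ≠ 0)
    (hxσ : ∀ i, (α (σ i) : ℂ) * x (σ (σ i)) = α i * x i) :
    ∃ w : m → ℝ, (∀ i, α (σ i) * w (σ (σ i)) = α i * w i) ∧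
      0 < ∑ i, α i * (w i * w (σ i)) := by
  let y : m → ℝ := fun i => ‖x i‖
  let z : m → ℝ := fun i => (α i * y (σ i))⁻¹
  have hy : ∀ i, α (σ i) * y (σ (σ i)) = α i * y i := fun i => by
    simpa [y, abs_of_pos (hα _)] using congrArg norm (hxσ i)
  have hz : ∀ i, α (σ i) * z (σ (σ i)) = α i * z i := fun i => by
    simp only [z]
    rw [hy (σ i), mul_inv, mul_inv, mul_inv_cancel_left₀ (hα (σ i)).ne',
      mul_inv_cancel_left₀ (hα i).ne']
  have hy0 : ∀ i, 0 ≤ y i := fun i => norm_nonneg _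
  have hz0 : ∀ i, 0 ≤ z i := fun i => inv_nonneg.2 (mul_nonneg (hα i).le (hy0 _))
  refine ⟨y + z, fun i => by simp only [Pi.add_apply, mul_add, hy, hz], ?_⟩
  obtain ⟨j, hj⟩ := Function.ne_iff.1 hx
  obtain ⟨i, rfl⟩ := σ.surjective j
  have hyi : 0 < y (σ i) := norm_pos_iff.2 hj
  have hzi : 0 < z i := inv_pos.2 (mul_pos (hα i) hyi)
  refine Finset.sum_pos' (fun k _ => ?_) ⟨i, Finset.mem_univ i, ?_⟩
  · exact mul_nonneg (hα k).le (mul_nonneg (add_nonneg (hy0 _) (hz0 _))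
      (add_nonneg (hy0 _) (hz0 _)))
  · exact mul_pos (hα i) (mul_pos (add_pos_of_nonneg_of_pos (hy0 _) hzi)
      (add_pos_of_pos_of_nonneg hyi (hz0 _)))

section WeightedPermutation

variable {m : Type*} [Fintype m] [DecidableEq m]

/-- The weighted permutation matrix whose `i`-th row has the real weight `α i` in column `σ i`. -/
def weightedPermMatrix (σ : Equiv.Perm m) (α : m → ℝ) : Matrix m m ℂ :=
  diagonal (fun i => (α i : ℂ)) * σ.permMatrix ℂ

lemma weightedPermMatrix_apply (σ : Equiv.Perm m) (α : m → ℝ) (i j : m) :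
    weightedPermMatrix σ α i j = if j = σ i then (α i : ℂ) else 0 := by
  simp [weightedPermMatrix, diagonal_mul, Equiv.Perm.permMatrix, PEquiv.toMatrix_apply, eq_comm]

lemma weightedPermMatrix_map_star (σ : Equiv.Perm m) (α : m → ℝ) :
    (weightedPermMatrix σ α).map star = weightedPermMatrix σ α := by
  ext i j
  rw [map_apply, weightedPermMatrix_apply]
  split_ifs <;> simp

lemma weightedPermMatrix_mulVec (σ : Equiv.Perm m) (α : m → ℝ) (x : m → ℂ) (i : m) :
    (weightedPermMatrix σ α *ᵥ x) i = α i * x (σ i) := by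
  rw [weightedPermMatrix, ← mulVec_mulVec, mulVec_diagonal, permMatrix_mulVec, Function.comp_apply]

lemma weightedPermMatrix_conjTranspose_mulVec (σ : Equiv.Perm m) (α : m → ℝ) (x : m → ℂ) (i : m) :
    ((weightedPermMatrix σ α)ᴴ *ᵥ x) (σ i) = α i * x i := by
  rw [weightedPermMatrix, conjTranspose_mul, conjTranspose_permMatrix, diagonal_conjTranspose,
    ← mulVec_mulVec, permMatrix_mulVec]
  simp [mulVec_diagonal]

lemma imaginaryPart_weightedPermMatrix_mulVec_eq_zero_iff {σ : Equiv.Perm m} {α : m → ℝ}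
    {x : m → ℂ} : (ℑ (weightedPermMatrix σ α) : Matrix m m ℂ) *ᵥ x = 0 ↔
      ∀ i, (α (σ i) : ℂ) * x (σ (σ i)) = α i * x i := by
  rw [imaginaryPart_mulVec_eq_zero_iff, funext_iff, ← σ.forall_congr_right]
  simp only [weightedPermMatrix_mulVec, weightedPermMatrix_conjTranspose_mulVec]

lemma quadForm_weightedPermMatrix_ofReal (σ : Equiv.Perm m) (α w : m → ℝ) :
    quadForm (weightedPermMatrix σ α) (fun i => (w i : ℂ)) =
      (∑ i, α i * (w i * w (σ i)) : ℝ) := by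
  rw [quadForm, dotProduct, Complex.ofReal_sum]
  refine Finset.sum_congr rfl fun i _ => ?_
  rw [weightedPermMatrix_mulVec, Pi.star_apply, Complex.star_def, Complex.conj_ofReal,
    Complex.ofReal_mul, Complex.ofReal_mul, mul_left_comm]

lemma compressesInto_weightedPermMatrix {σ : Equiv.Perm m} {α : m → ℝ} (hα : ∀ i, 0 < α i)
    (hrank : Fintype.card m ≤ (ℑ (weightedPermMatrix σ α) : Matrix m m ℂ).rank + 2) :
    CompressesInto (weightedPermMatrix σ α) lowerLexCone (Fin ((Fintype.card m + 1) / 2)) := by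
  refine compressesInto_lowerLexCone_of_ker (weightedPermMatrix_map_star σ α) hrank
    fun x hx hker => ?_
  obtain ⟨w, hw, hpos⟩ := exists_real_solution_sum_pos hα hx
    (imaginaryPart_weightedPermMatrix_mulVec_eq_zero_iff.1 hker)
  refine ⟨fun i => (w i : ℂ), imaginaryPart_weightedPermMatrix_mulVec_eq_zero_iff.2
    fun i => by exact_mod_cast hw i, ?_⟩
  rwa [quadForm_weightedPermMatrix_ofReal, Complex.ofReal_re]

end WeightedPermutation

section Shift

variable {n : ℕ}

lemma val_finRotate (i : Fin n) : (finRotate n i : ℕ) = (i + 1) % n := by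
  have := i.neZero
  rw [finRotate_apply, Fin.val_add, Fin.val_one', Nat.add_mod_mod]

lemma finRotate_mk_of_lt {s : ℕ} (hs : s + 1 < n) :
    finRotate n ⟨s, by omega⟩ = ⟨s + 1, hs⟩ :=
  Fin.ext <| (val_finRotate _).trans (Nat.mod_eq_of_lt hs)

lemma cycMat_eq_weightedPermMatrix {a : ℕ → ℂ} (ha : ∀ s < n, (a s).im = 0) :
    cycMat n a = weightedPermMatrix (finRotate n) fun i => (a i).re := by
  ext i j
  have hai : a i = (a i).re := Complex.ext rfl (ha i i.2)
  simp only [cycMat, of_apply, weightedPermMatrix_apply, Fin.ext_iff, val_finRotate, ← hai]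

lemma superMat_eq_weightedPermMatrix {b : ℕ → ℂ} (hb : ∀ s < n - 1, (b s).im = 0) :
    superMat n b =
      weightedPermMatrix (finRotate n) fun i => if (i : ℕ) + 1 < n then (b i).re else 0 := by
  ext i j
  simp only [superMat, of_apply, weightedPermMatrix_apply, Fin.ext_iff, val_finRotate]
  by_cases hi : (i : ℕ) + 1 < n
  · have hbi : b i = (b i).re := Complex.ext rfl (hb i (by omega))
    rw [Nat.mod_eq_of_lt hi, if_pos hi, ← hbi]
  · rw [if_neg (by omega), if_neg hi, Complex.ofReal_zero, ite_self]

lemma eq_zero_of_finRotate_recurrence {R : Type*} [MulZeroClass R] [NoZeroDivisors R]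
    {α x : Fin n → R} (hα : ∀ i : Fin n, (i : ℕ) + 1 < n → α i ≠ 0)
    (hx : ∀ i, α (finRotate n i) * x (finRotate n (finRotate n i)) = α i * x i)
    (hx01 : ∀ i : Fin n, (i : ℕ) < 2 → x i = 0) : x = 0 := by
  suffices h : ∀ s (hs : s < n), x ⟨s, hs⟩ = 0 from funext fun i => h i i.2
  intro s
  induction s using Nat.twoStepInduction with
  | zero => exact fun hs => hx01 _ Nat.zero_lt_two
  | one => exact fun hs => hx01 _ Nat.one_lt_two
  | more s ih _ =>
    intro hs
    have hrec := hx ⟨s, by omega⟩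
    rw [finRotate_mk_of_lt (by omega), finRotate_mk_of_lt hs, ih, mul_zero] at hrec
    exact (mul_eq_zero.1 hrec).resolve_left (hα ⟨s + 1, _⟩ hs)

lemma eq_zero_of_finRotate_recurrence_of_last_eq_zero {R : Type*} [MulZeroClass R]
    [NoZeroDivisors R] {α x : Fin n → R} (hα : ∀ i : Fin n, (i : ℕ) + 1 < n → α i ≠ 0)
    (hα_last : ∀ i : Fin n, (i : ℕ) + 1 = n → α i = 0)
    (hx : ∀ i, α (finRotate n i) * x (finRotate n (finRotate n i)) = α i * x i)
    (hx0 : ∀ hn : 0 < n, x ⟨0, hn⟩ = 0) : x = 0 := by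
  refine eq_zero_of_finRotate_recurrence hα hx ?_
  rintro ⟨_ | _ | i, hi⟩ hi2
  · exact hx0 hi
  · have hlast : ((⟨n - 1, by omega⟩ : Fin n) : ℕ) + 1 = n := Nat.sub_add_cancel (by omega)
    have hrotate : finRotate n ⟨n - 1, by omega⟩ = ⟨0, by omega⟩ := Fin.ext <| by
      rw [val_finRotate, hlast, Nat.mod_self]
    have hrec := hx ⟨n - 1, by omega⟩
    rw [hrotate, finRotate_mk_of_lt hi, hα_last _ hlast, zero_mul] at hrec
    exact (mul_eq_zero.1 hrec).resolve_left (hα _ hi)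
  · exact absurd hi2 (by simp)

lemma compressesInto_cycMat {a : ℕ → ℂ} (ha : ∀ s < n, (a s).im = 0 ∧ 0 < (a s).re) :
    CompressesInto (cycMat n a) lowerLexCone (Fin ((n + 1) / 2)) := by
  rw [cycMat_eq_weightedPermMatrix fun s hs => (ha s hs).1]
  have hα : ∀ i : Fin n, 0 < (a i).re := fun i => (ha i i.2).2
  have hrank := card_le_rank_add_card
    (H := (ℑ (weightedPermMatrix (finRotate n) fun i => (a i).re) : Matrix (Fin n) (Fin n) ℂ))
    {i : Fin n | (i : ℕ) < 2} fun x hx hx01 => by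
      rw [imaginaryPart_weightedPermMatrix_mulVec_eq_zero_iff] at hx
      exact eq_zero_of_finRotate_recurrence (α := fun i => ((a i).re : ℂ))
        (fun i _ => Complex.ofReal_ne_zero.2 (hα i).ne') hx (by simpa using hx01)
  rw [Fin.card_filter_val_lt] at hrank
  refine (compressesInto_weightedPermMatrix hα ?_).of_card_le (by simp)
  exact hrank.trans (Nat.add_le_add_left (min_le_right n 2) _)

lemma compressesInto_superMat {b : ℕ → ℂ} (hb : ∀ t < n - 1, (b t).im = 0 ∧ 0 < (b t).re) :
    CompressesInto (superMat n b) lowerLexCone (Fin (n / 2)) := by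
  rw [superMat_eq_weightedPermMatrix fun t ht => (hb t ht).1]
  set β : Fin n → ℝ := fun i => if (i : ℕ) + 1 < n then (b i).re else 0
  have hβ : ∀ i : Fin n, (i : ℕ) + 1 < n → (β i : ℂ) ≠ 0 := fun i hi => by
    simpa only [β, if_pos hi, Complex.ofReal_ne_zero] using (hb i (by omega)).2.ne'
  have hβ_last : ∀ i : Fin n, (i : ℕ) + 1 = n → (β i : ℂ) = 0 := fun i hi =>
    Complex.ofReal_eq_zero.2 (if_neg hi.not_lt)
  have hrank := card_le_rank_add_card
    (H := (ℑ (weightedPermMatrix (finRotate n) β) : Matrix (Fin n) (Fin n) ℂ))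
    {i : Fin n | (i : ℕ) < 1}
    fun x hx hx0 => by
      rw [imaginaryPart_weightedPermMatrix_mulVec_eq_zero_iff] at hx
      exact eq_zero_of_finRotate_recurrence_of_last_eq_zero hβ hβ_last hx
        fun hn => hx0 ⟨0, hn⟩ (by simp)
  rw [Fin.card_filter_val_lt, Fintype.card_fin] at hrank
  refine ((compressesInto_im_neg (weightedPermMatrix_map_star _ β)).mono
    im_neg_subset_lowerLexCone).of_card_le ?_
  rw [Fintype.card_fin, Fintype.card_fin]
  omega

lemma div_two_le_zdi_cycMat (a : ℕ → ℂ) : n / 2 ≤ zdi (cycMat n a) := by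
  rw [← Fintype.card_fin (n / 2)]
  refine card_le_zdi_of_submatrix_eq_zero (f := fun s => ⟨2 * s, by omega⟩)
    (fun s t hst => by simpa [Fin.ext_iff] using hst) ?_
  ext s t
  have hst : 2 * (t : ℕ) ≠ (2 * s + 1) % n := by
    rw [Nat.mod_eq_of_lt (by omega)]
    omega
  exact if_neg hst

lemma succ_div_two_le_zdi_superMat (b : ℕ → ℂ) : (n + 1) / 2 ≤ zdi (superMat n b) := by
  rw [← Fintype.card_fin ((n + 1) / 2)]
  refine card_le_zdi_of_submatrix_eq_zero (f := fun s => ⟨2 * s, by omega⟩)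
    (fun s t hst => by simpa [Fin.ext_iff] using hst) ?_
  ext s t
  have hst : 2 * (t : ℕ) ≠ 2 * s + 1 := by omega
  exact if_neg hst

end Shift

instance sumElimFintype.{u} {α β : Type*} {f : α → Type u} {g : β → Type u} [∀ a, Fintype (f a)]
    [∀ b, Fintype (g b)] : ∀ i, Fintype (Sum.elim f g i)
  | Sum.inl a => inferInstanceAs (Fintype (f a))
  | Sum.inr b => inferInstanceAs (Fintype (g b))

/-- Proposition 4.8. -/
theorem zdi_weighted_permutation_positive_weights {N J r : ℕ}
    (nsz : Fin J → ℕ) (msz : Fin r → ℕ)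
    (hn2 : ∀ j, 2 ≤ nsz j) (hm1 : ∀ k, 1 ≤ msz k)
    (a : Fin J → ℕ → ℂ) (b : Fin r → ℕ → ℂ)
    (ha : ∀ j s, s < nsz j → (a j s).im = 0 ∧ 0 < (a j s).re)
    (hb : ∀ k t, t < msz k - 1 → (b k t).im = 0 ∧ 0 < (b k t).re)
    (A : Matrix (Fin N) (Fin N) ℂ)
    (hwp : IsWeightedPerm A)
    (hsim : ∃ e : Fin N ≃
        (Σ i : Fin J ⊕ Fin r, Sum.elim (fun j => Fin (nsz j)) (fun k => Fin (msz k)) i),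
      Matrix.reindex e e A = bigBlock J r nsz msz a b) :
    zdi A = (∑ j, nsz j / 2) + (∑ k, (msz k + 1) / 2) := by
  obtain ⟨e, he⟩ := hsim
  rw [← zdi_reindex e A, he, bigBlock, zdi_blockDiagonal'_eq_sum zero_notMem_lowerLexCone
    (d := Sum.elim (fun j => nsz j / 2) fun k => (msz k + 1) / 2)
    (ι := fun i => Fin (Sum.elim (fun j => (nsz j + 1) / 2) (fun k => msz k / 2) i)),
    Fintype.sum_sum_type]
  · rfl
  · exact Sum.rec (fun j => compressesInto_cycMat (ha j)) fun k => compressesInto_superMat (hb k)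
  · exact Sum.rec (fun j => div_two_le_zdi_cycMat (a j)) fun k => succ_div_two_le_zdi_superMat (b k)
  · refine Sum.rec (fun j => ?_) fun k => ?_
    · change Fintype.card (Fin (nsz j)) ≤ _
      rw [Fintype.card_fin, Fintype.card_fin, Sum.elim_inl, Sum.elim_inl]
      omega
    · change Fintype.card (Fin (msz k)) ≤ _
      rw [Fintype.card_fin, Fintype.card_fin, Sum.elim_inr, Sum.elim_inr]
      omega
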